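/- Let A, Θ, M be nonempty finite sets with |M| ≥ 2|Θ|. There exists a set 𝒰_R ⊆ ℝ^{A×Θ} whose complement is Lebesgue-null and nowhere dense such that for every u_R ∈ 𝒰_R, every state-independent sender utility u_S ∈ ℝ^A, and every prior μ0 ∈ ΔΘ, the limit of the infimum χ-PBE sender payoffs satisfies lim_{χ↗1} w*_χ(μ0) = v̂(μ0) (strong robustness of the Bayesian persuasion value to partial credibility). -/

import Mathlib

open MeasureTheory Filter Topology

/-- A probability vector on a finite set. -/
def IsDist {X : Type*} [Fintype X] (f : X → ℝ) : Prop :=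
  (∀ x, 0 ≤ f x) ∧ ∑ x, f x = 1

/-- An experiment (official reporting protocol): a state-contingent distribution over
messages. -/
def IsExperiment {Θ M : Type*} [Fintype M] (ψ : Θ → M → ℝ) : Prop :=
  ∀ θ, IsDist (ψ θ)

/-- The receiver's best responses `A*_R(μ)` to a belief vector `μ` on a finite state
space. -/
def BRf {A Θ : Type*} [Fintype Θ] (uR : A → Θ → ℝ) (μ : Θ → ℝ) : Set A :=
  {a | ∀ a' : A, ∑ θ, uR a' θ * μ θ ≤ ∑ θ, uR a θ * μ θ}

/-- The belief simplex `ΔΘ` over a finite state space, viewed as a subspace of `ℝ^Θ`. -/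
abbrev Belief (Θ : Type*) [Fintype Θ] : Type _ := {f : Θ → ℝ // f ∈ stdSimplex ℝ Θ}

/-- The sender's upper value function `v(μ) = max_{a ∈ A*_R(μ)} u_S(a)` (state-independent
sender utility). -/
noncomputable def vG {A Θ : Type*} [Fintype Θ] (uS : A → ℝ) (uR : A → Θ → ℝ)
    (μ : Θ → ℝ) : ℝ :=
  sSup (uS '' BRf uR μ)

/-- The sender's lower value function `w(μ) = min_{a ∈ A*_R(μ)} u_S(a)`. -/
noncomputable def wG {A Θ : Type*} [Fintype Θ] (uS : A → ℝ) (uR : A → Θ → ℝ)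
    (μ : Θ → ℝ) : ℝ :=
  sInf (uS '' BRf uR μ)

/-- The set `I(μ0)` of information policies: Borel probability measures on the belief
simplex whose barycenter is the prior `μ0`. -/
def IPolF {Θ : Type*} [Fintype Θ] (μ0 : Θ → ℝ) : Set (ProbabilityMeasure (Belief Θ)) :=
  {p | ∀ θ : Θ, ∫ μ, (μ : Belief Θ).1 θ ∂(p : Measure (Belief Θ)) = μ0 θ}

/-- `v̂(μ0)`: the sender's Bayesian persuasion value. -/
noncomputable def vHatG {A Θ : Type*} [Fintype Θ] (uS : A → ℝ) (uR : A → Θ → ℝ)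
    (μ0 : Θ → ℝ) : ℝ :=
  sSup ((fun p : ProbabilityMeasure (Belief Θ) =>
    ∫ μ, vG uS uR (μ : Belief Θ).1 ∂(p : Measure (Belief Θ))) '' IPolF μ0)

/-- `ŵ(μ0)`: the sender's worst equilibrium value under full commitment. -/
noncomputable def wHatG {A Θ : Type*} [Fintype Θ] (uS : A → ℝ) (uR : A → Θ → ℝ)
    (μ0 : Θ → ℝ) : ℝ :=
  sSup ((fun p : ProbabilityMeasure (Belief Θ) =>
    ∫ μ, wG uS uR (μ : Belief Θ).1 ∂(p : Measure (Belief Θ))) '' IPolF μ0)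

/-- The sender's expected payoff in the partial-credibility game from (provisionally)
choosing experiment `ψ'`, given influencing strategy `σ` and receiver strategy `α`. -/
noncomputable def chiValue {A Θ M : Type*} [Fintype A] [Fintype Θ] [Fintype M]
    (uS : A → ℝ) (μ0 : Θ → ℝ) (χ : ℝ)
    (σ : Θ → (Θ → M → ℝ) → M → ℝ) (α : M → (Θ → M → ℝ) → A → ℝ)
    (ψ' : Θ → M → ℝ) : ℝ :=
  ∑ θ, μ0 θ * ∑ m, (χ * ψ' θ m + (1 - χ) * σ θ ψ' m) * ∑ a, uS a * α m ψ' a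

/-- Perfect Bayesian `χ`-equilibrium of the partial-credibility persuasion game. -/
def IsChiPBE {A Θ M : Type*} [Fintype A] [Fintype Θ] [Fintype M]
    (uS : A → ℝ) (uR : A → Θ → ℝ) (μ0 : Θ → ℝ) (χ : ℝ)
    (ψ : Θ → M → ℝ) (σ : Θ → (Θ → M → ℝ) → M → ℝ)
    (α : M → (Θ → M → ℝ) → A → ℝ) (β : M → (Θ → M → ℝ) → Θ → ℝ) : Prop :=
  IsExperiment ψ ∧
  (∀ ψ' : Θ → M → ℝ, IsExperiment ψ' → ∀ θ, IsDist (σ θ ψ')) ∧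
  (∀ ψ' : Θ → M → ℝ, IsExperiment ψ' → ∀ m, IsDist (α m ψ')) ∧
  (∀ ψ' : Θ → M → ℝ, IsExperiment ψ' → ∀ m, IsDist (β m ψ')) ∧
  -- (1) the sender's experiment choice is optimal
  (∀ ψ' : Θ → M → ℝ, IsExperiment ψ' →
    chiValue uS μ0 χ σ α ψ' ≤ chiValue uS μ0 χ σ α ψ) ∧
  -- (2) the receiver best responds to his beliefs
  (∀ ψ' : Θ → M → ℝ, IsExperiment ψ' → ∀ (m : M) (a : A),
    α m ψ' a ≠ 0 → a ∈ BRf uR (β m ψ')) ∧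
  -- (3) beliefs are Bayesian
  (∀ ψ' : Θ → M → ℝ, IsExperiment ψ' → ∀ (m : M) (θ : Θ),
    β m ψ' θ * (∑ θ', μ0 θ' * (χ * ψ' θ' m + (1 - χ) * σ θ' ψ' m)) =
      μ0 θ * (χ * ψ' θ m + (1 - χ) * σ θ ψ' m)) ∧
  -- (4) the influencing sender's message choice is optimal
  (∀ ψ' : Θ → M → ℝ, IsExperiment ψ' → ∀ (θ : Θ) (m : M), σ θ ψ' m ≠ 0 →
    ∀ m' : M, ∑ a, uS a * α m' ψ' a ≤ ∑ a, uS a * α m ψ' a)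

/-- The set of sender `χ`-PBE payoffs. -/
def chiPBEPayoffs (A : Type*) {Θ : Type*} (M : Type*) [Fintype A] [Fintype Θ] [Fintype M]
    (uS : A → ℝ) (uR : A → Θ → ℝ) (μ0 : Θ → ℝ) (χ : ℝ) : Set ℝ :=
  {s | ∃ (ψ : Θ → M → ℝ) (σ : Θ → (Θ → M → ℝ) → M → ℝ)
      (α : M → (Θ → M → ℝ) → A → ℝ) (β : M → (Θ → M → ℝ) → Θ → ℝ),
    IsChiPBE uS uR μ0 χ ψ σ α β ∧ s = chiValue uS μ0 χ σ α ψ}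

/-- `w*_χ(μ0)`: the infimum sender `χ`-PBE payoff. -/
noncomputable def wStar (A : Type*) {Θ : Type*} (M : Type*)
    [Fintype A] [Fintype Θ] [Fintype M]
    (uS : A → ℝ) (uR : A → Θ → ℝ) (μ0 : Θ → ℝ) (χ : ℝ) : ℝ :=
  sInf (chiPBEPayoffs A M uS uR μ0 χ)

/-!
The sender may deviate to any experiment, so a `χ`-PBE is an optimal choice among continuation
equilibria: it pays at least the worst continuation payoff of every experiment, and at most `v̂`,
since the posteriors split the prior. It therefore suffices to find for each `l < v̂` an experiment
all of whose continuation payoffs exceed `l` for `χ` near `1`.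

Take a splitting of the prior worth more than `l` and pool the posteriors at which the receiver
takes the same action. For generic `u_R`, an action optimal at a belief supported on `supp μ0` is
uniquely optimal at another one: raising `u_R(a, ·)` by a constant makes `a` strictly optimal
wherever it was weakly so, hence the exceptional set, which is closed, meets each line in this
direction at most once. Mixing in a little of these beliefs makes every recommendation strict at
small cost, and Carathéodory's theorem brings the number of messages down to `|Θ| + 1`. By upper
hemicontinuity of best responses, no influencing strategy upsets the recommendations for `χ` near
`1`, so every continuation payoff is at least `χ V + (1 - χ) min u_S`, with `V > l` the value of the
perturbed splitting.

For this to say anything about the infimum, `χ`-PBE must exist. A continuation equilibrium is a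
Wardrop equilibrium in which the influencing sender spreads her mass over the messages, the payoff
of a message depending on the mass it receives; and the set of all continuation payoffs is compact,
so one of them is the largest.
-/

section BestResponse

variable {A Θ : Type*} [Fintype Θ] {uS : A → ℝ} {uR : A → Θ → ℝ} {x z : Θ → ℝ} {a : A}

theorem mem_BRf_iff : a ∈ BRf uR x ↔ ∀ a', uR a' ⬝ᵥ x ≤ uR a ⬝ᵥ x := Iff.rfl

theorem BRf_smul {c : ℝ} (hc : 0 < c) : BRf uR (c • x) = BRf uR x := by
  ext a
  simp [mem_BRf_iff, dotProduct_smul, hc]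

theorem BRf_subset_BRf_smul {c : ℝ} (hc : 0 ≤ c) : BRf uR x ⊆ BRf uR (c • x) := by
  intro a ha a'
  simpa only [dotProduct, Pi.smul_apply, smul_eq_mul, mul_left_comm, Finset.mul_sum]
    using mul_le_mul_of_nonneg_left (ha a') hc

theorem BRf_add_subset_right (hx : a ∈ BRf uR x) (hz : a ∈ BRf uR z) :
    BRf uR (x + z) ⊆ BRf uR z := by
  intro b hb
  rw [mem_BRf_iff] at hx hz hb ⊢
  simp only [dotProduct_add] at hb
  intro a'
  linarith [hx b, hz a', hb a]

theorem isClosed_setOf_mem_BRf (a : A) :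
    IsClosed {p : (A → Θ → ℝ) × (Θ → ℝ) | a ∈ BRf p.1 p.2} := by
  simp only [mem_BRf_iff, Set.ofPred_forall]
  exact isClosed_iInter fun a' => isClosed_le (by fun_prop) (by fun_prop)

theorem sum_smul_mul_BRf_smul (f : Set A → ℝ) {c : ℝ} (hc : 0 ≤ c) (y : Θ → ℝ) :
    (∑ θ, (c • y) θ) * f (BRf uR (c • y)) = c * ((∑ θ, y θ) * f (BRf uR y)) := by
  rcases hc.eq_or_lt with rfl | hc
  · simp
  · simp only [BRf_smul hc, Pi.smul_apply, smul_eq_mul, ← Finset.mul_sum, mul_assoc]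

variable [Finite A]

theorem eventually_BRf_subset (p : (A → Θ → ℝ) × (Θ → ℝ)) :
    ∀ᶠ p' in 𝓝 p, BRf p'.1 p'.2 ⊆ BRf p.1 p.2 := by
  have escape : ∀ a, a ∉ BRf p.1 p.2 → ∀ᶠ p' in 𝓝 p, a ∉ BRf p'.1 p'.2 := fun a ha =>
    (isClosed_setOf_mem_BRf a).isOpen_compl.mem_nhds ha
  have all_escape : ∀ᶠ p' in 𝓝 p, ∀ a, a ∉ BRf p.1 p.2 → a ∉ BRf p'.1 p'.2 :=
    eventually_all.2 fun a => by
      by_cases ha : a ∈ BRf p.1 p.2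
      · exact .of_forall fun _ h => absurd ha h
      · exact (escape a ha).mono fun _ h _ => h
  exact all_escape.mono fun _ h a => not_imp_not.1 (h a)

theorem eventually_BRf_right_subset (uR : A → Θ → ℝ) (x : Θ → ℝ) :
    ∀ᶠ x' in 𝓝 x, BRf uR x' ⊆ BRf uR x :=
  (Continuous.prodMk_right uR).continuousAt.eventually (eventually_BRf_subset (uR, x))

theorem le_vG (h : a ∈ BRf uR x) : uS a ≤ vG uS uR x :=
  le_csSup (Set.toFinite _).bddAbove (Set.mem_image_of_mem uS h)

theorem wG_le (h : a ∈ BRf uR x) : wG uS uR x ≤ uS a :=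
  csInf_le (Set.toFinite _).bddBelow (Set.mem_image_of_mem uS h)

variable [Nonempty A]

theorem BRf_nonempty : (BRf uR x).Nonempty :=
  Finite.exists_max fun a => uR a ⬝ᵥ x

theorem exists_mem_BRf_eq_vG : ∃ a ∈ BRf uR x, uS a = vG uS uR x :=
  (BRf_nonempty.image uS).csSup_mem (Set.toFinite _)

theorem wG_le_vG : wG uS uR x ≤ vG uS uR x :=
  let ⟨_, ha⟩ := BRf_nonempty (uR := uR) (x := x)
  (wG_le ha).trans (le_vG ha)

theorem vG_le_of_BRf_subset (h : BRf uR x ⊆ BRf uR z) : vG uS uR x ≤ vG uS uR z :=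
  csSup_le_csSup (Set.toFinite _).bddAbove (BRf_nonempty.image uS) (Set.image_mono h)

theorem wG_le_of_BRf_subset (h : BRf uR x ⊆ BRf uR z) : wG uS uR z ≤ wG uS uR x :=
  csInf_le_csInf (Set.toFinite _).bddBelow (BRf_nonempty.image uS) (Set.image_mono h)

theorem upperSemicontinuous_vG (uS : A → ℝ) (uR : A → Θ → ℝ) :
    UpperSemicontinuous (vG uS uR) := fun x _ hc =>
  (eventually_BRf_right_subset uR x).mono fun _ h => (vG_le_of_BRf_subset h).trans_lt hc

theorem lowerSemicontinuous_wG (uS : A → ℝ) (uR : A → Θ → ℝ) :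
    LowerSemicontinuous (wG uS uR) := fun x _ hc =>
  (eventually_BRf_right_subset uR x).mono fun _ h => hc.trans_le (wG_le_of_BRf_subset h)

end BestResponse

section FiniteDistributions

variable {ι : Type*} [Fintype ι] {f α : ι → ℝ} {c : ℝ}

theorem dotProduct_le_of_mem_stdSimplex (hα : α ∈ stdSimplex ℝ ι) (hf : ∀ i, α i ≠ 0 → f i ≤ c) :
    f ⬝ᵥ α ≤ c := by
  calc f ⬝ᵥ α ≤ ∑ i, c * α i := by
        refine Finset.sum_le_sum fun i _ => ?_
        rcases eq_or_ne (α i) 0 with h | h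
        · simp [h]
        · exact mul_le_mul_of_nonneg_right (hf i h) (hα.1 i)
    _ = c := by rw [← Finset.mul_sum, hα.2, mul_one]

theorem le_dotProduct_of_mem_stdSimplex (hα : α ∈ stdSimplex ℝ ι) (hf : ∀ i, α i ≠ 0 → c ≤ f i) :
    c ≤ f ⬝ᵥ α := by
  have := dotProduct_le_of_mem_stdSimplex (f := -f) (c := -c) hα fun i h => neg_le_neg (hf i h)
  rwa [neg_dotProduct, neg_le_neg_iff] at this

theorem exists_mem_stdSimplex_dotProduct_eq {S : Set ι} (hS : S.Nonempty)
    (hlo : sInf (f '' S) ≤ c) (hhi : c ≤ sSup (f '' S)) :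
    ∃ α ∈ stdSimplex ℝ ι, (∀ i, α i ≠ 0 → i ∈ S) ∧ f ⬝ᵥ α = c := by
  classical
  obtain ⟨i, hi, hfi⟩ := (hS.image f).csInf_mem (Set.toFinite _)
  obtain ⟨j, hj, hfj⟩ := (hS.image f).csSup_mem (Set.toFinite _)
  have hc : c ∈ segment ℝ (f i) (f j) := by
    rw [segment_eq_Icc (by linarith)]
    exact ⟨hfi.trans_le hlo, hhi.trans_eq hfj.symm⟩
  obtain ⟨p, q, hp, hq, hpq, rfl⟩ := hc
  refine ⟨p • Pi.single i 1 + q • Pi.single j 1,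
    convex_stdSimplex ℝ ι (single_mem_stdSimplex ℝ i) (single_mem_stdSimplex ℝ j) hp hq hpq,
    fun k hk => ?_, by simp [dotProduct_add, dotProduct_smul]⟩
  by_contra hkS
  exact hk (by simp [ne_of_mem_of_not_mem hi hkS |>.symm,
    ne_of_mem_of_not_mem hj hkS |>.symm])

theorem nonempty_of_mem_stdSimplex (hα : α ∈ stdSimplex ℝ ι) : Nonempty ι := by
  by_contra h
  rw [not_nonempty_iff] at h
  simpa using hα.2

theorem exists_mem_stdSimplex_smul_eq [Nonempty ι] {y : ι → ℝ} (hy : 0 ≤ y) :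
    ∃ b ∈ stdSimplex ℝ ι, (∑ i, y i) • b = y := by
  classical
  rcases (Finset.sum_nonneg fun i _ => hy i).eq_or_lt with h | h
  · refine ⟨Pi.single (Classical.arbitrary ι) 1, single_mem_stdSimplex ℝ _, ?_⟩
    rw [← h, zero_smul]
    exact ((Fintype.sum_eq_zero_iff_of_nonneg hy).1 h.symm).symm
  · refine ⟨(∑ i, y i)⁻¹ • y, ⟨fun i => mul_nonneg (inv_nonneg.2 h.le) (hy i), ?_⟩, ?_⟩
    · simp only [Pi.smul_apply, smul_eq_mul, ← Finset.mul_sum, inv_mul_cancel₀ h.ne']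
    · rw [smul_inv_smul₀ h.ne']

end FiniteDistributions

section WardropEquilibrium

theorem intervalIntegrable_of_semicontinuous {v w : ℝ → ℝ} (hv : UpperSemicontinuous v)
    (hw : LowerSemicontinuous w) (hwv : w ≤ v) (a b : ℝ) : IntervalIntegrable v volume a b := by
  obtain ⟨C, hC⟩ := (hv.upperSemicontinuousOn (Set.uIcc a b))
    |>.bddAbove_of_isCompact isCompact_uIcc
  obtain ⟨c, hc⟩ := (hw.lowerSemicontinuousOn (Set.uIcc a b))
    |>.bddBelow_of_isCompact isCompact_uIcc
  refine IntegrableOn.intervalIntegrable <| Measure.integrableOn_of_bounded (M := max |c| |C|)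
    isCompact_uIcc.measure_ne_top hv.measurable.aestronglyMeasurable <|
    (ae_restrict_mem measurableSet_uIcc).mono fun t ht => abs_le_max_abs_abs ?_ ?_
  · exact (hc (Set.mem_image_of_mem w ht)).trans (hwv t)
  · exact hC (Set.mem_image_of_mem v ht)

theorem eventually_forall_mem_Icc_sub_add {p : ℝ → Prop} {x : ℝ} (hp : ∀ᶠ t in 𝓝 x, p t) :
    ∀ᶠ δ in 𝓝[>] 0, ∀ t ∈ Set.Icc (x - δ) (x + δ), p t := by
  obtain ⟨ε, hε, hball⟩ := Metric.nhds_basis_closedBall.eventually_iff.1 hp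
  filter_upwards [Ioo_mem_nhdsGT hε] with δ hδ t ht
  refine hball ?_
  rw [Real.closedBall_eq_Icc]
  exact ⟨by linarith [ht.1, hδ.2], by linarith [ht.2, hδ.2]⟩

theorem eventually_integral_sub_le {f : ℝ → ℝ} {x c : ℝ}
    (hf : ∀ a b, IntervalIntegrable f volume a b) (hc : ∀ᶠ t in 𝓝 x, f t ≤ c) :
    ∀ᶠ δ in 𝓝[>] 0, ∫ t in (x - δ)..x, f t ≤ δ * c := by
  filter_upwards [eventually_forall_mem_Icc_sub_add hc, self_mem_nhdsWithin] with δ h (hδ : 0 < δ)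
  have := intervalIntegral.integral_mono_on (by linarith) (hf (x - δ) x)
    intervalIntegrable_const fun t ht => h t ⟨ht.1, by linarith [ht.2]⟩
  simpa using this

theorem eventually_le_integral_add {f : ℝ → ℝ} {x c : ℝ}
    (hf : ∀ a b, IntervalIntegrable f volume a b) (hc : ∀ᶠ t in 𝓝 x, c ≤ f t) :
    ∀ᶠ δ in 𝓝[>] 0, δ * c ≤ ∫ t in x..(x + δ), f t := by
  filter_upwards [eventually_forall_mem_Icc_sub_add hc, self_mem_nhdsWithin] with δ h (hδ : 0 < δ)
  have := intervalIntegral.integral_mono_on (by linarith) intervalIntegrable_const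
    (hf x (x + δ)) fun t ht => h t ⟨by linarith [ht.1], ht.2⟩
  simpa using this

variable {ι : Type*} [Fintype ι] {x : ι → ℝ} {i j : ι}

theorem add_single_sub_single_mem_stdSimplex [DecidableEq ι] (hx : x ∈ stdSimplex ℝ ι) {δ : ℝ}
    (hδ : 0 ≤ δ) (hδi : δ ≤ x i) : x + Pi.single j δ - Pi.single i δ ∈ stdSimplex ℝ ι := by
  refine ⟨fun k => ?_, by simp [Finset.sum_add_distrib, hx.2]⟩
  have hj : (0 : ι → ℝ) ≤ Pi.single j δ := Pi.single_nonneg.2 hδ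
  rcases eq_or_ne k i with rfl | hk
  · have := hj k
    simp only [Pi.sub_apply, Pi.add_apply, Pi.single_eq_same, Pi.zero_apply] at this ⊢
    linarith
  · simpa [hk] using add_nonneg (hx.1 k) (hj k)

theorem sum_integral_add_single_sub_single [DecidableEq ι] {f : ι → ℝ → ℝ}
    (hf : ∀ k a b, IntervalIntegrable (f k) volume a b) (hij : i ≠ j) (δ : ℝ) :
    ∑ k, (∫ t in 0..(x + Pi.single j δ - Pi.single i δ : ι → ℝ) k, f k t)
        - ∑ k, ∫ t in 0..x k, f k t =
      (∫ t in x j..(x j + δ), f j t) - ∫ t in (x i - δ)..x i, f i t := by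
  rw [← Finset.sum_sub_distrib, Fintype.sum_eq_add j i hij.symm]
  · rw [intervalIntegral.integral_interval_sub_left (hf ..) (hf ..),
      intervalIntegral.integral_interval_sub_left (hf ..) (hf ..)]
    simp [hij, hij.symm, ← intervalIntegral.integral_symm, sub_eq_add_neg]
  · rintro k ⟨hkj, hki⟩
    simp [hkj, hki]

/- Beckmann's argument: the separable potential `∑ i, ∫ t in 0..x i, v i t` attains its maximum on
the simplex, and shifting mass from a used `i` to `j` would raise it if `v i (x i) < w j (x j)`. -/
theorem exists_wardrop_equilibrium [Nonempty ι] {v w : ι → ℝ → ℝ}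
    (hv : ∀ i, UpperSemicontinuous (v i)) (hw : ∀ i, LowerSemicontinuous (w i))
    (hwv : ∀ i, w i ≤ v i) :
    ∃ x ∈ stdSimplex ℝ ι, ∃ s, (∀ i, w i (x i) ≤ s) ∧ ∀ i, 0 < x i → s ≤ v i (x i) := by
  classical
  have hint i : ∀ a b, IntervalIntegrable (v i) volume a b :=
    intervalIntegrable_of_semicontinuous (hv i) (hw i) (hwv i)
  have hcont : Continuous fun x : ι → ℝ => ∑ i, ∫ t in 0..x i, v i t :=
    continuous_finsetSum _ fun i _ =>
      (intervalIntegral.continuous_primitive (hint i) 0).comp (continuous_apply i)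
  obtain ⟨x, hx, hmax⟩ := (isCompact_stdSimplex ℝ ι).exists_isMaxOn
    ⟨_, single_mem_stdSimplex ℝ (Classical.arbitrary ι)⟩ hcont.continuousOn
  suffices key : ∀ i j, 0 < x i → w j (x j) ≤ v i (x i) by
    obtain ⟨j, hj⟩ := Finite.exists_max fun j => w j (x j)
    exact ⟨x, hx, w j (x j), hj, fun i hi => key i j hi⟩
  intro i j hi
  by_contra! hlt
  have hij : i ≠ j := by rintro rfl; exact hlt.not_ge (hwv i (x i))
  obtain ⟨c, hic, hcj⟩ := exists_between hlt
  obtain ⟨d, hcd, hdj⟩ := exists_between hcj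
  have hloss := eventually_integral_sub_le (hint i) <| (hv i _ _ hic).mono fun _ h => h.le
  have hgain := eventually_le_integral_add (hint j) <|
    (hw j _ _ hdj).mono fun t h => h.le.trans (hwv j t)
  obtain ⟨δ, hloss, hgain, hδ, hδi⟩ := (hloss.and (hgain.and (Ioo_mem_nhdsGT hi))).exists
  have hle := hmax (add_single_sub_single_mem_stdSimplex (j := j) hx hδ.le hδi.le)
  have hdiff := sum_integral_add_single_sub_single hint (x := x) hij δ
  simp only [Set.mem_ofPred_eq] at hle
  linarith [mul_lt_mul_of_pos_left hcd hδ]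

end WardropEquilibrium

section Continuation

variable {A Θ M : Type*}

/-- The joint law of message and state when the state has law `μ0` and messages are sent according
to `ψ`; the row at `m` is the posterior after `m` scaled by the probability of `m`. -/
def jointLaw (μ0 : Θ → ℝ) (ψ : Θ → M → ℝ) (m : M) (θ : Θ) : ℝ := μ0 θ * ψ θ m

variable [Fintype A] [Fintype Θ] [Fintype M]

/-- The sender's expected payoff when `J` is the joint law of message and state and the receiver
answers `m` with the mixed action `α m`. -/
def expectedPayoff (uS : A → ℝ) (J : M → Θ → ℝ) (α : M → A → ℝ) : ℝ :=
  ∑ m, (∑ θ, J m θ) * (uS ⬝ᵥ α m)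

/-- Conditions (2)–(4) of a `χ`-PBE in the continuation game following a single experiment `ψ`. The
strategies `σ`, `α`, `β` are those of the continuation, so they no longer depend on `ψ`. -/
structure IsContinuation (uS : A → ℝ) (uR : A → Θ → ℝ) (μ0 : Θ → ℝ) (χ : ℝ)
    (ψ σ : Θ → M → ℝ) (α : M → A → ℝ) (β : M → Θ → ℝ) : Prop where
  isExperiment : IsExperiment σ
  response_mem : ∀ m, α m ∈ stdSimplex ℝ A
  belief_mem : ∀ m, β m ∈ stdSimplex ℝ Θ
  mem_BRf : ∀ m a, α m a ≠ 0 → a ∈ BRf uR (β m)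
  bayes : ∀ m, (∑ θ, jointLaw μ0 (χ • ψ + (1 - χ) • σ) m θ) • β m =
    jointLaw μ0 (χ • ψ + (1 - χ) • σ) m
  payoff_le : ∀ θ m, σ θ m ≠ 0 → ∀ m', uS ⬝ᵥ α m' ≤ uS ⬝ᵥ α m

/-- The sender's payoffs in continuation equilibria following the experiment `ψ`. -/
def continuationPayoffs (uS : A → ℝ) (uR : A → Θ → ℝ) (μ0 : Θ → ℝ) (χ : ℝ) (ψ : Θ → M → ℝ) :
    Set ℝ :=
  {s | ∃ σ α β, IsContinuation uS uR μ0 χ ψ σ α β ∧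
    expectedPayoff uS (jointLaw μ0 (χ • ψ + (1 - χ) • σ)) α = s}

theorem chiValue_eq_expectedPayoff (uS : A → ℝ) (μ0 : Θ → ℝ) (χ : ℝ)
    (σ : Θ → (Θ → M → ℝ) → M → ℝ) (α : M → (Θ → M → ℝ) → A → ℝ) (ψ : Θ → M → ℝ) :
    chiValue uS μ0 χ σ α ψ =
      expectedPayoff uS (jointLaw μ0 (χ • ψ + (1 - χ) • fun θ => σ θ ψ)) fun m => α m ψ := by
  simp only [chiValue, expectedPayoff, Finset.mul_sum, Finset.sum_mul]
  rw [Finset.sum_comm]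
  simp [jointLaw, dotProduct, Finset.mul_sum, mul_assoc]

theorem isChiPBE_iff {uS : A → ℝ} {uR : A → Θ → ℝ} {μ0 : Θ → ℝ} {χ : ℝ} {ψ : Θ → M → ℝ}
    {σ : Θ → (Θ → M → ℝ) → M → ℝ} {α : M → (Θ → M → ℝ) → A → ℝ}
    {β : M → (Θ → M → ℝ) → Θ → ℝ} :
    IsChiPBE uS uR μ0 χ ψ σ α β ↔ IsExperiment ψ ∧
      (∀ ψ' : Θ → M → ℝ, IsExperiment ψ' → IsContinuation uS uR μ0 χ ψ'
        (fun θ => σ θ ψ') (fun m => α m ψ') (fun m => β m ψ')) ∧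
      ∀ ψ' : Θ → M → ℝ, IsExperiment ψ' → chiValue uS μ0 χ σ α ψ' ≤ chiValue uS μ0 χ σ α ψ := by
  have bayes_comm (ψ' : Θ → M → ℝ) (m : M) :
      (∑ θ, jointLaw μ0 (χ • ψ' + (1 - χ) • fun θ => σ θ ψ') m θ) • β m ψ' =
        jointLaw μ0 (χ • ψ' + (1 - χ) • fun θ => σ θ ψ') m ↔
      ∀ θ, β m ψ' θ * (∑ θ', μ0 θ' * (χ * ψ' θ' m + (1 - χ) * σ θ' ψ' m)) =
        μ0 θ * (χ * ψ' θ m + (1 - χ) * σ θ ψ' m) := by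
    simp [funext_iff, jointLaw, mul_comm (β m ψ' _)]
  constructor
  · rintro ⟨hψ, hσ, hα, hβ, hopt, hbr, hbayes, hinc⟩
    exact ⟨hψ, fun ψ' h => ⟨hσ ψ' h, hα ψ' h, hβ ψ' h, hbr ψ' h,
      fun m => (bayes_comm ψ' m).2 (hbayes ψ' h m), hinc ψ' h⟩, hopt⟩
  · rintro ⟨hψ, hcont, hopt⟩
    exact ⟨hψ, fun ψ' h => (hcont ψ' h).isExperiment, fun ψ' h => (hcont ψ' h).response_mem,
      fun ψ' h => (hcont ψ' h).belief_mem, hopt, fun ψ' h => (hcont ψ' h).mem_BRf,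
      fun ψ' h m => (bayes_comm ψ' m).1 ((hcont ψ' h).bayes m),
      fun ψ' h => (hcont ψ' h).payoff_le⟩

theorem mem_chiPBEPayoffs_iff {uS : A → ℝ} {uR : A → Θ → ℝ} {μ0 : Θ → ℝ} {χ s : ℝ} :
    s ∈ chiPBEPayoffs A M uS uR μ0 χ ↔
      (∃ ψ : Θ → M → ℝ, IsExperiment ψ ∧ s ∈ continuationPayoffs uS uR μ0 χ ψ) ∧
      ∀ ψ : Θ → M → ℝ, IsExperiment ψ → ∃ s' ∈ continuationPayoffs uS uR μ0 χ ψ, s' ≤ s := by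
  constructor
  · rintro ⟨ψ, σ, α, β, hpbe, rfl⟩
    obtain ⟨hψ, hcont, hopt⟩ := isChiPBE_iff.1 hpbe
    have hmem ψ' (h : IsExperiment ψ') :
        chiValue uS μ0 χ σ α ψ' ∈ continuationPayoffs uS uR μ0 χ ψ' :=
      ⟨_, _, _, hcont ψ' h, (chiValue_eq_expectedPayoff ..).symm⟩
    exact ⟨⟨ψ, hψ, hmem ψ hψ⟩, fun ψ' h => ⟨_, hmem ψ' h, hopt ψ' h⟩⟩
  · rintro ⟨⟨ψ, hψ, σ₀, α₀, β₀, hcont₀, hs⟩, hdev⟩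
    have hplay : ∀ ψ' : Θ → M → ℝ, ∃ σ α β, IsExperiment ψ' →
        IsContinuation uS uR μ0 χ ψ' σ α β ∧
        expectedPayoff uS (jointLaw μ0 (χ • ψ' + (1 - χ) • σ)) α ≤ s ∧
        (ψ' = ψ → expectedPayoff uS (jointLaw μ0 (χ • ψ' + (1 - χ) • σ)) α = s) := by
      intro ψ'
      obtain rfl | hne := eq_or_ne ψ' ψ
      · exact ⟨σ₀, α₀, β₀, fun _ => ⟨hcont₀, hs.le, fun _ => hs⟩⟩
      by_cases h : IsExperiment ψ'
      · obtain ⟨_, ⟨σ, α, β, hcont, rfl⟩, hle⟩ := hdev ψ' h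
        exact ⟨σ, α, β, fun _ => ⟨hcont, hle, fun heq => absurd heq hne⟩⟩
      · exact ⟨σ₀, α₀, β₀, fun h' => absurd h' h⟩
    choose σ α β hplay using hplay
    have hvalue : chiValue uS μ0 χ (fun θ ψ' => σ ψ' θ) (fun m ψ' => α ψ' m) ψ = s :=
      (chiValue_eq_expectedPayoff ..).trans ((hplay ψ hψ).2.2 rfl)
    refine ⟨ψ, fun θ ψ' => σ ψ' θ, fun m ψ' => α ψ' m, fun m ψ' => β ψ' m,
      isChiPBE_iff.2 ⟨hψ, fun ψ' h => (hplay ψ' h).1, fun ψ' h => ?_⟩, hvalue.symm⟩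
    rw [hvalue, chiValue_eq_expectedPayoff]
    exact (hplay ψ' h).2.1

end Continuation

section Existence

variable {A Θ M : Type*} {uS : A → ℝ} {uR : A → Θ → ℝ} {μ0 : Θ → ℝ} {χ : ℝ}

/- For `q = 0` the posterior is `μ0` for every `t > 0`, so the ray is constant: this keeps it
continuous and away from the zero vector, where every action would be a best response. -/
theorem exists_continuous_posterior_ray {q : Θ → ℝ} (hq : 0 ≤ q) (hμ0 : 0 ≤ μ0) (hμ0' : μ0 ≠ 0) :
    ∃ y : ℝ → Θ → ℝ, Continuous y ∧
      ∀ t, 0 ≤ t → 0 ≤ y t ∧ y t ≠ 0 ∧ ∃ c : ℝ, q + t • μ0 = c • y t := by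
  rcases eq_or_ne q 0 with rfl | hq'
  · exact ⟨fun _ => μ0, continuous_const, fun t _ => ⟨hμ0, hμ0', t, zero_add _⟩⟩
  · refine ⟨fun t => q + t • μ0, by fun_prop, fun t ht => ?_⟩
    have hle : q ≤ q + t • μ0 := le_add_of_nonneg_right (smul_nonneg ht hμ0)
    exact ⟨hq.trans hle, fun h => hq' ((hle.trans_eq h).antisymm hq), 1, (one_smul ..).symm⟩

variable [Fintype M]

theorem isCompact_setOf_isExperiment : IsCompact {ψ : Θ → M → ℝ | IsExperiment ψ} := by
  convert isCompact_univ_pi fun _ : Θ => isCompact_stdSimplex ℝ M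
  ext ψ
  exact Set.mem_univ_pi.symm

theorem IsExperiment.jointLaw_nonneg {ψ : Θ → M → ℝ} (hψ : IsExperiment ψ) (hμ0 : 0 ≤ μ0) (m : M) :
    0 ≤ jointLaw μ0 ψ m := fun θ => mul_nonneg (hμ0 θ) ((hψ θ).1 m)

variable [Fintype Θ]

theorem exists_mem_stdSimplex_BRf_eq {y : Θ → ℝ} (hy : 0 ≤ y) (hy' : y ≠ 0) (uR : A → Θ → ℝ) :
    ∃ b ∈ stdSimplex ℝ Θ, (∑ θ, y θ) • b = y ∧ BRf uR b = BRf uR y := by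
  obtain ⟨θ, -⟩ := Function.ne_iff.1 hy'
  have : Nonempty Θ := ⟨θ⟩
  obtain ⟨b, hb, hby⟩ := exists_mem_stdSimplex_smul_eq hy
  have hpos : 0 < ∑ θ, y θ := Fintype.sum_pos (hy.lt_of_ne' hy')
  exact ⟨b, hb, hby, by rw [← BRf_smul hpos, hby]⟩

variable [Fintype A]

theorem continuationPayoffs_nonempty [Nonempty A] [Nonempty M] (hμ0 : μ0 ∈ stdSimplex ℝ Θ)
    (hχ : χ ∈ Set.Icc (0 : ℝ) 1) {ψ : Θ → M → ℝ} (hψ : IsExperiment ψ) :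
    (continuationPayoffs uS uR μ0 χ ψ).Nonempty := by
  have hμ0' : μ0 ≠ 0 := by rintro rfl; simpa using hμ0.2
  choose y hycont hy using fun m => exists_continuous_posterior_ray
    (smul_nonneg hχ.1 (hψ.jointLaw_nonneg hμ0.1 m)) hμ0.1 hμ0'
  have hv m : UpperSemicontinuous fun t => vG uS uR (y m ((1 - χ) * t)) :=
    (upperSemicontinuous_vG uS uR).comp (by fun_prop)
  have hw m : LowerSemicontinuous fun t => wG uS uR (y m ((1 - χ) * t)) :=
    (lowerSemicontinuous_wG uS uR).comp (by fun_prop)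
  obtain ⟨x, hx, s, hws, hsv⟩ := exists_wardrop_equilibrium hv hw fun m t => wG_le_vG
  have hy m := hy m ((1 - χ) * x m) (mul_nonneg (sub_nonneg.2 hχ.2) (hx.1 m))
  choose β hβ hβy hBR using fun m => exists_mem_stdSimplex_BRf_eq (hy m).1 (hy m).2.1 uR
  choose α hα hαBR hαs using fun m => exists_mem_stdSimplex_dotProduct_eq BRf_nonempty
    (le_min (hws m) wG_le_vG) (min_le_right s _)
  refine ⟨_, fun _ => x, α, β, ⟨fun _ => hx, hα, hβ, fun m a ha => (hBR m).symm ▸ hαBR m a ha,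
    fun m => ?_, fun _ m hm m' => ?_⟩, rfl⟩
  · obtain ⟨c, hc⟩ := (hy m).2.2
    have hJ : jointLaw μ0 (χ • ψ + (1 - χ) • fun _ => x) m =
        (c * ∑ θ, y m ((1 - χ) * x m) θ) • β m := by
      rw [mul_smul, hβy, ← hc]
      ext θ
      simp only [jointLaw, Pi.add_apply, Pi.smul_apply, smul_eq_mul]
      ring
    rw [hJ]
    simp [← Finset.mul_sum, (hβ m).2]
  · rw [hαs, hαs, min_eq_left (hsv m ((hx.1 m).lt_of_ne' hm))]
    exact min_le_left ..

theorem isClosed_setOf_isContinuation {X : Type*} [TopologicalSpace X] {ψ σ : X → Θ → M → ℝ}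
    {α : X → M → A → ℝ} {β : X → M → Θ → ℝ} (hψ : Continuous ψ) (hσ : Continuous σ)
    (hα : Continuous α) (hβ : Continuous β) :
    IsClosed {x | IsContinuation uS uR μ0 χ (ψ x) (σ x) (α x) (β x)} := by
  have hexp : IsClosed {x | IsExperiment (σ x)} :=
    isCompact_setOf_isExperiment.isClosed.preimage hσ
  have hresp : IsClosed {x | ∀ m, α x m ∈ stdSimplex ℝ A} := by
    simp only [Set.ofPred_forall]
    exact isClosed_iInter fun m => (isClosed_stdSimplex ℝ A).preimage (by fun_prop)
  have hbel : IsClosed {x | ∀ m, β x m ∈ stdSimplex ℝ Θ} := by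
    simp only [Set.ofPred_forall]
    exact isClosed_iInter fun m => (isClosed_stdSimplex ℝ Θ).preimage (by fun_prop)
  have hbr : IsClosed {x | ∀ m a, α x m a ≠ 0 → a ∈ BRf uR (β x m)} := by
    simp only [Set.ofPred_forall]
    exact isClosed_iInter fun m => isClosed_iInter fun a => isClosed_imp
      (isOpen_ne_fun (by fun_prop) continuous_const)
      ((isClosed_setOf_mem_BRf a).preimage (f := fun x => (uR, β x m)) (by fun_prop))
  have hbayes : IsClosed {x | ∀ m, (∑ θ, jointLaw μ0 (χ • ψ x + (1 - χ) • σ x) m θ) • β x m =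
      jointLaw μ0 (χ • ψ x + (1 - χ) • σ x) m} := by
    unfold jointLaw
    simp only [Set.ofPred_forall]
    exact isClosed_iInter fun m => isClosed_eq (by fun_prop) (by fun_prop)
  have hinc : IsClosed {x | ∀ θ m, σ x θ m ≠ 0 → ∀ m', uS ⬝ᵥ α x m' ≤ uS ⬝ᵥ α x m} := by
    simp only [Set.ofPred_forall]
    refine isClosed_iInter fun θ => isClosed_iInter fun m => isClosed_imp
      (isOpen_ne_fun (by fun_prop) continuous_const) ?_
    simp only [Set.ofPred_forall]
    exact isClosed_iInter fun m' => isClosed_le (by fun_prop) (by fun_prop)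
  convert hexp.inter <| hresp.inter <| hbel.inter <| hbr.inter <| hbayes.inter hinc using 1
  ext x
  exact ⟨fun ⟨h₁, h₂, h₃, h₄, h₅, h₆⟩ => ⟨h₁, h₂, h₃, h₄, h₅, h₆⟩,
    fun ⟨h₁, h₂, h₃, h₄, h₅, h₆⟩ => ⟨h₁, h₂, h₃, h₄, h₅, h₆⟩⟩

theorem isCompact_biUnion_continuationPayoffs (uS : A → ℝ) (uR : A → Θ → ℝ) (μ0 : Θ → ℝ) (χ : ℝ) :
    IsCompact (⋃ ψ ∈ {ψ : Θ → M → ℝ | IsExperiment ψ}, continuationPayoffs uS uR μ0 χ ψ) := by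
  let profiles : Set ((Θ → M → ℝ) × (Θ → M → ℝ) × (M → A → ℝ) × (M → Θ → ℝ)) :=
    {p | IsExperiment p.1 ∧ IsContinuation uS uR μ0 χ p.1 p.2.1 p.2.2.1 p.2.2.2}
  have hclosed : IsClosed profiles :=
    (isCompact_setOf_isExperiment.isClosed.preimage continuous_fst).inter
      (isClosed_setOf_isContinuation (by fun_prop) (by fun_prop) (by fun_prop) (by fun_prop))
  have hcompact : IsCompact profiles :=
    (isCompact_setOf_isExperiment.prod <| isCompact_setOf_isExperiment.prod <|
      (isCompact_univ_pi fun _ => isCompact_stdSimplex ℝ A).prod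
        (isCompact_univ_pi fun _ => isCompact_stdSimplex ℝ Θ)).of_isClosed_subset hclosed
    fun p hp => ⟨hp.1, hp.2.isExperiment, fun m _ => hp.2.response_mem m,
      fun m _ => hp.2.belief_mem m⟩
  convert hcompact.image (f := fun p =>
    expectedPayoff uS (jointLaw μ0 (χ • p.1 + (1 - χ) • p.2.1)) p.2.2.1) ?_
  · ext s
    simp [profiles, continuationPayoffs, and_assoc]
  · unfold expectedPayoff jointLaw
    fun_prop

theorem chiPBEPayoffs_nonempty [Nonempty A] [Nonempty M] (hμ0 : μ0 ∈ stdSimplex ℝ Θ)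
    (hχ : χ ∈ Set.Icc (0 : ℝ) 1) : (chiPBEPayoffs A M uS uR μ0 χ).Nonempty := by
  classical
  have hexp : IsExperiment fun _ : Θ => Pi.single (Classical.arbitrary M) (1 : ℝ) :=
    fun _ => single_mem_stdSimplex ℝ _
  obtain ⟨s₀, hs₀⟩ := continuationPayoffs_nonempty (uS := uS) (uR := uR) hμ0 hχ hexp
  obtain ⟨s, hs, hmax⟩ := (isCompact_biUnion_continuationPayoffs uS uR μ0 χ).exists_isGreatest
    ⟨s₀, Set.mem_biUnion hexp hs₀⟩
  refine ⟨s, mem_chiPBEPayoffs_iff.2 ⟨by simpa using hs, fun ψ hψ => ?_⟩⟩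
  obtain ⟨s', hs'⟩ := continuationPayoffs_nonempty (uS := uS) (uR := uR) hμ0 hχ hψ
  exact ⟨s', hs', hmax (Set.mem_biUnion hψ hs')⟩

end Existence

section PersuasionValue

/-- A finite family of nonnegative vectors summing to the prior: a finitely supported information
policy, each posterior being scaled by its probability. -/
structure IsSplitting {Θ ι : Type*} [Fintype ι] (μ0 : Θ → ℝ) (q : ι → Θ → ℝ) : Prop where
  nonneg : ∀ i, 0 ≤ q i
  sum_eq : ∑ i, q i = μ0

/-- The integral of the identity over a set `T` of beliefs, i.e. the barycenter of `p` conditional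
on `T` scaled by the probability of `T`. -/
noncomputable def partialBarycenter {Θ : Type*} [Fintype Θ] (p : Measure (Belief Θ))
    (T : Set (Belief Θ)) (θ : Θ) : ℝ :=
  ∫ μ in T, μ.1 θ ∂p

variable {A Θ ι : Type*} {μ0 : Θ → ℝ} [Fintype ι] {q : ι → Θ → ℝ}

theorem IsExperiment.isSplitting_jointLaw {ψ : Θ → ι → ℝ} (hψ : IsExperiment ψ) (hμ0 : 0 ≤ μ0) :
    IsSplitting μ0 (jointLaw μ0 ψ) := by
  refine ⟨hψ.jointLaw_nonneg hμ0, ?_⟩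
  ext θ
  simp [jointLaw, ← Finset.mul_sum, (hψ θ).2]

namespace IsSplitting

theorem sum_apply (hq : IsSplitting μ0 q) (θ : Θ) : ∑ i, q i θ = μ0 θ := by
  rw [← Finset.sum_apply, hq.sum_eq]

theorem exists_jointLaw_eq [Nonempty ι] (hq : IsSplitting μ0 q) :
    ∃ ψ : Θ → ι → ℝ, IsExperiment ψ ∧ jointLaw μ0 ψ = q := by
  choose ψ hψ hψq using fun θ => exists_mem_stdSimplex_smul_eq fun i => hq.nonneg i θ
  refine ⟨ψ, hψ, ?_⟩
  ext i θ
  simpa [jointLaw, hq.sum_apply] using congrFun (hψq θ) i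

variable [Fintype Θ]

theorem sum_sum_eq_one (hq : IsSplitting μ0 q) (hμ0 : μ0 ∈ stdSimplex ℝ Θ) :
    ∑ i, ∑ θ, q i θ = 1 := by
  rw [Finset.sum_comm]
  simp only [hq.sum_apply, hμ0.2]

end IsSplitting

variable [Fintype Θ]

theorem integrable_apply_belief (p : Measure (Belief Θ)) [IsFiniteMeasure p] (θ : Θ) :
    Integrable (fun μ : Belief Θ => μ.1 θ) p := by
  have hcont : Continuous fun μ : Belief Θ => μ.1 θ :=
    (continuous_apply θ).comp continuous_subtype_val
  refine .of_bound hcont.aestronglyMeasurable 1 (.of_forall fun μ => ?_)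
  rw [Real.norm_of_nonneg (μ.2.1 θ)]
  exact (mem_Icc_of_mem_stdSimplex μ.2 θ).2

theorem dotProduct_partialBarycenter (p : Measure (Belief Θ)) [IsFiniteMeasure p]
    (T : Set (Belief Θ)) (c : Θ → ℝ) :
    c ⬝ᵥ partialBarycenter p T = ∫ μ in T, c ⬝ᵥ μ.1 ∂p := by
  simp only [dotProduct, partialBarycenter]
  rw [integral_finsetSum _ fun θ _ => ((integrable_apply_belief p θ).integrableOn).const_mul (c θ)]
  simp only [integral_const_mul]

theorem sum_partialBarycenter (p : Measure (Belief Θ)) [IsFiniteMeasure p] (T : Set (Belief Θ)) :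
    ∑ θ, partialBarycenter p T θ = p.real T := by
  have hone (μ : Belief Θ) : (1 : Θ → ℝ) ⬝ᵥ μ.1 = 1 := (one_dotProduct _).trans μ.2.2
  rw [← one_dotProduct, dotProduct_partialBarycenter]
  simp [hone]

theorem mem_BRf_partialBarycenter {uR : A → Θ → ℝ} {a : A} {T : Set (Belief Θ)}
    (hT : MeasurableSet T) (hBR : ∀ μ ∈ T, a ∈ BRf uR μ.1) (p : Measure (Belief Θ))
    [IsFiniteMeasure p] : a ∈ BRf uR (partialBarycenter p T) := by
  have hint (c : Θ → ℝ) : Integrable (fun μ : Belief Θ => c ⬝ᵥ μ.1) (p.restrict T) :=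
    integrable_finsetSum _ fun θ _ => (integrable_apply_belief _ θ).const_mul (c θ)
  rw [mem_BRf_iff]
  intro a'
  rw [dotProduct_partialBarycenter, dotProduct_partialBarycenter]
  exact setIntegral_mono_on (hint (uR a')) (hint (uR a)) hT fun μ hμ => hBR μ hμ a'

theorem isSplitting_partialBarycenter {p : ProbabilityMeasure (Belief Θ)} (hp : p ∈ IPolF μ0)
    {T : ι → Set (Belief Θ)} (hT : ∀ i, MeasurableSet (T i))
    (hdisj : Pairwise (Function.onFun Disjoint T)) (hcover : ⋃ i, T i = Set.univ) :
    IsSplitting μ0 fun i => partialBarycenter (p : Measure (Belief Θ)) (T i) := by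
  refine ⟨fun i θ => setIntegral_nonneg (hT i) fun μ _ => μ.2.1 θ, ?_⟩
  ext θ
  rw [Finset.sum_apply, ← hp θ, ← setIntegral_univ, ← hcover]
  exact (integral_iUnion_fintype hT hdisj fun i =>
    (integrable_apply_belief _ θ).integrableOn).symm

theorem IsSplitting.exists_mem_IPolF (hq : IsSplitting μ0 q) (hμ0 : μ0 ∈ stdSimplex ℝ Θ) :
    ∃ b : ι → Belief Θ, (∀ i, (∑ θ, q i θ) • (b i).1 = q i) ∧
      ∃ p ∈ IPolF μ0, ∀ f : Belief Θ → ℝ,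
        ∫ μ, f μ ∂(p : Measure (Belief Θ)) = ∑ i, (∑ θ, q i θ) * f (b i) := by
  have := nonempty_of_mem_stdSimplex hμ0
  choose b hb hbq using fun i => exists_mem_stdSimplex_smul_eq (hq.nonneg i)
  have hmass i : 0 ≤ ∑ θ, q i θ := Finset.sum_nonneg fun θ _ => hq.nonneg i θ
  let p : Measure (Belief Θ) :=
    ∑ i, ENNReal.ofReal (∑ θ, q i θ) • Measure.dirac ⟨b i, hb i⟩
  have hp : IsProbabilityMeasure p := ⟨by
    simp [p, ← ENNReal.ofReal_sum_of_nonneg fun i _ => hmass i, hq.sum_sum_eq_one hμ0]⟩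
  have hint (f : Belief Θ → ℝ) : ∫ μ, f μ ∂p = ∑ i, (∑ θ, q i θ) * f ⟨b i, hb i⟩ := by
    rw [integral_finsetSum_measure fun i _ =>
      (integrable_dirac (by simp)).smul_measure ENNReal.ofReal_ne_top]
    simp [integral_smul_measure, integral_dirac, ENNReal.toReal_ofReal (hmass _)]
  refine ⟨fun i => ⟨b i, hb i⟩, hbq, ⟨p, hp⟩, fun θ => ?_, hint⟩
  refine (hint fun μ => μ.1 θ).trans ?_
  rw [← hq.sum_apply θ]
  exact Finset.sum_congr rfl fun i _ => congrFun (hbq i) θ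

variable [Nonempty A] {uS : A → ℝ} {uR : A → Θ → ℝ}

theorem IsSplitting.sum_vG_le_vHatG [Finite A] (hq : IsSplitting μ0 q)
    (hμ0 : μ0 ∈ stdSimplex ℝ Θ) :
    ∑ i, (∑ θ, q i θ) * vG uS uR (q i) ≤ vHatG uS uR μ0 := by
  obtain ⟨b, hbq, p, hp, hint⟩ := hq.exists_mem_IPolF hμ0
  obtain ⟨C, hC⟩ := (Set.finite_range fun a => |uS a|).bddAbove
  have hbdd : BddAbove ((fun p : ProbabilityMeasure (Belief Θ) =>
      ∫ μ, vG uS uR μ.1 ∂(p : Measure (Belief Θ))) '' IPolF μ0) := by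
    refine ⟨C, ?_⟩
    rintro _ ⟨p, -, rfl⟩
    have hle := norm_integral_le_of_norm_le_const (μ := (p : Measure (Belief Θ)))
      (f := fun μ => vG uS uR μ.1) (C := C) <| .of_forall fun μ => by
        obtain ⟨a, -, ha⟩ := exists_mem_BRf_eq_vG (uS := uS) (uR := uR) (x := μ.1)
        exact ha ▸ hC (Set.mem_range_self a)
    simpa using (le_abs_self _).trans hle
  refine (Finset.sum_congr rfl fun i _ => ?_).trans_le
    (le_csSup hbdd ⟨p, hp, hint fun μ => vG uS uR μ.1⟩)
  have hmass : 0 ≤ ∑ θ, q i θ := Finset.sum_nonneg fun θ _ => hq.nonneg i θ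
  have hsmul := sum_smul_mul_BRf_smul (fun S => sSup (uS '' S)) (uR := uR) hmass (b i).1
  rw [hbq, (b i).2.2, one_mul] at hsmul
  exact hsmul

theorem exists_measurable_selection_vG [Finite A] (uS : A → ℝ) (uR : A → Θ → ℝ) :
    ∃ f : (Θ → ℝ) → A, (∀ a, MeasurableSet (f ⁻¹' {a})) ∧
      ∀ μ, f μ ∈ BRf uR μ ∧ uS (f μ) = vG uS uR μ := by
  let _ : MeasurableSpace A := ⊤
  have hsel : ∀ S : Set A, ∃ a, S.Nonempty → a ∈ S ∧ uS a = sSup (uS '' S) := fun S => by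
    rcases S.eq_empty_or_nonempty with rfl | hS
    · exact ⟨Classical.arbitrary A, fun h => absurd h Set.not_nonempty_empty⟩
    · obtain ⟨a, ha⟩ := (hS.image uS).csSup_mem (Set.toFinite _)
      exact ⟨a, fun _ => ha⟩
  choose sel hsel using hsel
  have hBR : Measurable (BRf uR) := measurable_set_iff.2 fun a =>
    measurableSet_setOfPred.1 <|
      ((isClosed_setOf_mem_BRf a).preimage (Continuous.prodMk_right uR)).measurableSet
  exact ⟨fun μ => sel (BRf uR μ),
    fun a => (Measurable.of_discrete.comp hBR) (measurableSet_singleton a),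
    fun μ => hsel _ BRf_nonempty⟩

variable [Fintype A]

theorem exists_isSplitting_of_mem_IPolF {p : ProbabilityMeasure (Belief Θ)} (hp : p ∈ IPolF μ0)
    (uS : A → ℝ) (uR : A → Θ → ℝ) :
    ∃ x : A → Θ → ℝ, IsSplitting μ0 x ∧ (∀ a, a ∈ BRf uR (x a)) ∧
      ∑ a, (∑ θ, x a θ) * uS a = ∫ μ, vG uS uR μ.1 ∂(p : Measure (Belief Θ)) := by
  obtain ⟨f, hf, hfv⟩ := exists_measurable_selection_vG uS uR
  let T : A → Set (Belief Θ) := fun a => {μ | f μ.1 = a}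
  have hT a : MeasurableSet (T a) := measurable_subtype_coe (hf a)
  have hdisj : Pairwise (Function.onFun Disjoint T) := fun a b hab =>
    Set.disjoint_left.2 fun μ ha hb => hab (ha.symm.trans hb)
  have hcover : ⋃ a, T a = Set.univ := Set.eq_univ_of_forall fun μ => Set.mem_iUnion.2 ⟨_, rfl⟩
  have hvT a : Set.EqOn (fun μ : Belief Θ => vG uS uR μ.1) (fun _ => uS a) (T a) := by
    rintro μ rfl
    exact (hfv μ.1).2.symm
  refine ⟨_, isSplitting_partialBarycenter hp hT hdisj hcover,
    fun a => mem_BRf_partialBarycenter (hT a) (by rintro μ rfl; exact (hfv μ.1).1) _, ?_⟩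
  rw [← setIntegral_univ, ← hcover, integral_iUnion_fintype hT hdisj fun a =>
    (integrableOn_const (C := uS a)).congr_fun (hvT a).symm (hT a)]
  refine Finset.sum_congr rfl fun a _ => ?_
  rw [setIntegral_congr_fun (hT a) (hvT a), setIntegral_const, sum_partialBarycenter, smul_eq_mul]

theorem exists_isSplitting_of_lt_vHatG (hμ0 : μ0 ∈ stdSimplex ℝ Θ) {l : ℝ}
    (hl : l < vHatG uS uR μ0) :
    ∃ x : A → Θ → ℝ, IsSplitting μ0 x ∧ (∀ a, a ∈ BRf uR (x a)) ∧
      l < ∑ a, (∑ θ, x a θ) * uS a := by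
  have hne : (IPolF μ0).Nonempty :=
    ⟨⟨Measure.dirac ⟨μ0, hμ0⟩, inferInstance⟩, fun θ => integral_dirac _ _⟩
  obtain ⟨_, ⟨p, hp, rfl⟩, hlp⟩ := exists_lt_of_lt_csSup (hne.image _) hl
  obtain ⟨x, hx, hBR, hval⟩ := exists_isSplitting_of_mem_IPolF hp uS uR
  exact ⟨x, hx, hBR, hlp.trans_eq hval.symm⟩

end PersuasionValue

section Bounds

variable {A Θ M : Type*} {uS : A → ℝ} {uR : A → Θ → ℝ} {μ0 : Θ → ℝ} {χ : ℝ} {ψ σ : Θ → M → ℝ}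

theorem jointLaw_mix (μ0 : Θ → ℝ) (χ : ℝ) (ψ σ : Θ → M → ℝ) :
    jointLaw μ0 (χ • ψ + (1 - χ) • σ) = χ • jointLaw μ0 ψ + (1 - χ) • jointLaw μ0 σ := by
  ext m θ
  simp only [jointLaw, Pi.add_apply, Pi.smul_apply, smul_eq_mul]
  ring

variable [Fintype M]

theorem IsExperiment.mix (hψ : IsExperiment ψ) (hσ : IsExperiment σ)
    (hχ : χ ∈ Set.Icc (0 : ℝ) 1) : IsExperiment (χ • ψ + (1 - χ) • σ) := fun θ =>
  convex_stdSimplex ℝ M (hψ θ) (hσ θ) hχ.1 (sub_nonneg.2 hχ.2) (add_sub_cancel χ 1)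

variable [Fintype Θ]

theorem eventually_forall_isExperiment_BRf_mix_subset [Finite A] (uR : A → Θ → ℝ) (μ0 : Θ → ℝ)
    (ψ : Θ → M → ℝ) :
    ∀ᶠ χ in 𝓝 (1 : ℝ), ∀ σ : Θ → M → ℝ, IsExperiment σ → ∀ m,
      BRf uR (jointLaw μ0 (χ • ψ + (1 - χ) • σ) m) ⊆ BRf uR (jointLaw μ0 ψ m) := by
  refine isCompact_setOf_isExperiment.eventually_forall_of_forall_eventually fun σ _ =>
    eventually_all.2 fun m => ?_
  have hcont : Continuous fun z : ℝ × (Θ → M → ℝ) =>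
      jointLaw μ0 (z.1 • ψ + (1 - z.1) • z.2) m := by
    unfold jointLaw
    fun_prop
  refine (hcont.tendsto' (1, σ) _ ?_).eventually (eventually_BRf_right_subset uR _)
  simp

variable [Fintype A] {α : M → A → ℝ} {β : M → Θ → ℝ}

theorem expectedPayoff_mix (uS : A → ℝ) (χ : ℝ) (q ρ : M → Θ → ℝ) (α : M → A → ℝ) :
    expectedPayoff uS (χ • q + (1 - χ) • ρ) α =
      χ * expectedPayoff uS q α + (1 - χ) * expectedPayoff uS ρ α := by
  simp only [expectedPayoff, Finset.mul_sum, ← Finset.sum_add_distrib]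
  refine Finset.sum_congr rfl fun m _ => ?_
  simp only [Pi.add_apply, Pi.smul_apply, smul_eq_mul, Finset.sum_add_distrib, ← Finset.mul_sum]
  ring

theorem IsSplitting.le_expectedPayoff {q : M → Θ → ℝ} (hq : IsSplitting μ0 q)
    (hμ0 : μ0 ∈ stdSimplex ℝ Θ) (hα : ∀ m, α m ∈ stdSimplex ℝ A) {c : ℝ} (hc : ∀ a, c ≤ uS a) :
    c ≤ expectedPayoff uS q α := by
  calc c = ∑ m, (∑ θ, q m θ) * c := by rw [← Finset.sum_mul, hq.sum_sum_eq_one hμ0, one_mul]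
    _ ≤ _ := Finset.sum_le_sum fun m _ => mul_le_mul_of_nonneg_left
      (le_dotProduct_of_mem_stdSimplex (hα m) fun a _ => hc a)
      (Finset.sum_nonneg fun θ _ => hq.nonneg m θ)

namespace IsContinuation

theorem isSplitting (h : IsContinuation uS uR μ0 χ ψ σ α β) (hψ : IsExperiment ψ)
    (hμ0 : 0 ≤ μ0) (hχ : χ ∈ Set.Icc (0 : ℝ) 1) :
    IsSplitting μ0 (jointLaw μ0 (χ • ψ + (1 - χ) • σ)) :=
  (hψ.mix h.isExperiment hχ).isSplitting_jointLaw hμ0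

theorem mem_BRf_jointLaw (h : IsContinuation uS uR μ0 χ ψ σ α β) (hψ : IsExperiment ψ)
    (hμ0 : 0 ≤ μ0) (hχ : χ ∈ Set.Icc (0 : ℝ) 1) {m : M} {a : A} (ha : α m a ≠ 0) :
    a ∈ BRf uR (jointLaw μ0 (χ • ψ + (1 - χ) • σ) m) :=
  h.bayes m ▸ BRf_subset_BRf_smul
    (Finset.sum_nonneg fun θ _ => (h.isSplitting hψ hμ0 hχ).nonneg m θ) (h.mem_BRf m a ha)

theorem expectedPayoff_le_vHatG [Nonempty A] (h : IsContinuation uS uR μ0 χ ψ σ α β)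
    (hψ : IsExperiment ψ) (hμ0 : μ0 ∈ stdSimplex ℝ Θ) (hχ : χ ∈ Set.Icc (0 : ℝ) 1) :
    expectedPayoff uS (jointLaw μ0 (χ • ψ + (1 - χ) • σ)) α ≤ vHatG uS uR μ0 := by
  have hJ := h.isSplitting hψ hμ0.1 hχ
  refine le_trans (Finset.sum_le_sum fun m _ => ?_) (hJ.sum_vG_le_vHatG (uS := uS) hμ0)
  exact mul_le_mul_of_nonneg_left (dotProduct_le_of_mem_stdSimplex (h.response_mem m)
    fun a ha => le_vG (h.mem_BRf_jointLaw hψ hμ0.1 hχ ha))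
    (Finset.sum_nonneg fun θ _ => hJ.nonneg m θ)

theorem mix_le_expectedPayoff (h : IsContinuation uS uR μ0 χ ψ σ α β) (hψ : IsExperiment ψ)
    (hμ0 : μ0 ∈ stdSimplex ℝ Θ) (hχ : χ ∈ Set.Icc (0 : ℝ) 1)
    (hBR : ∀ m, BRf uR (jointLaw μ0 (χ • ψ + (1 - χ) • σ) m) ⊆ BRf uR (jointLaw μ0 ψ m))
    {c : ℝ} (hc : ∀ a, c ≤ uS a) :
    χ * (∑ m, (∑ θ, jointLaw μ0 ψ m θ) * wG uS uR (jointLaw μ0 ψ m)) + (1 - χ) * c ≤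
      expectedPayoff uS (jointLaw μ0 (χ • ψ + (1 - χ) • σ)) α := by
  rw [jointLaw_mix, expectedPayoff_mix]
  refine add_le_add
    (mul_le_mul_of_nonneg_left (Finset.sum_le_sum fun m _ => ?_) hχ.1)
    (mul_le_mul_of_nonneg_left ?_ (sub_nonneg.2 hχ.2))
  · exact mul_le_mul_of_nonneg_left (le_dotProduct_of_mem_stdSimplex (h.response_mem m)
      fun a ha => wG_le (hBR m (h.mem_BRf_jointLaw hψ hμ0.1 hχ ha)))
      (Finset.sum_nonneg fun θ _ => hψ.jointLaw_nonneg hμ0.1 m θ)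
  · exact (h.isExperiment.isSplitting_jointLaw hμ0.1).le_expectedPayoff hμ0 h.response_mem hc

end IsContinuation

variable [Nonempty A] [Nonempty M]

theorem wStar_le_vHatG (hμ0 : μ0 ∈ stdSimplex ℝ Θ) (hχ : χ ∈ Set.Icc (0 : ℝ) 1) :
    wStar A M uS uR μ0 χ ≤ vHatG uS uR μ0 := by
  obtain ⟨c, hc⟩ := (Set.finite_range uS).bddBelow
  have hbdd : BddBelow (chiPBEPayoffs A M uS uR μ0 χ) := by
    refine ⟨c, fun s hs => ?_⟩
    obtain ⟨⟨ψ, hψ, σ, α, β, h, rfl⟩, -⟩ := mem_chiPBEPayoffs_iff.1 hs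
    exact (h.isSplitting hψ hμ0.1 hχ).le_expectedPayoff hμ0 h.response_mem
      fun a => hc (Set.mem_range_self a)
  obtain ⟨s, hs⟩ := chiPBEPayoffs_nonempty (M := M) (uS := uS) (uR := uR) hμ0 hχ
  obtain ⟨⟨ψ, hψ, σ, α, β, h, rfl⟩, -⟩ := mem_chiPBEPayoffs_iff.1 hs
  exact (csInf_le hbdd hs).trans (h.expectedPayoff_le_vHatG hψ hμ0 hχ)

theorem eventually_lt_wStar_of_isSplitting {q : M → Θ → ℝ} (hq : IsSplitting μ0 q)
    (hμ0 : μ0 ∈ stdSimplex ℝ Θ) {l : ℝ} (hl : l < ∑ m, (∑ θ, q m θ) * wG uS uR (q m)) :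
    ∀ᶠ χ in 𝓝[≤] 1, l < wStar A M uS uR μ0 χ := by
  obtain ⟨ψ, hψ, rfl⟩ := hq.exists_jointLaw_eq
  obtain ⟨c, hc⟩ := (Set.finite_range uS).bddBelow
  set V := ∑ m, (∑ θ, jointLaw μ0 ψ m θ) * wG uS uR (jointLaw μ0 ψ m)
  have hlim : Tendsto (fun χ => χ * V + (1 - χ) * c) (𝓝 1) (𝓝 V) :=
    Continuous.tendsto' (by fun_prop) _ _ (by ring)
  filter_upwards [self_mem_nhdsWithin, nhdsWithin_le_nhds (Ici_mem_nhds zero_lt_one),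
    nhdsWithin_le_nhds (hlim.eventually_const_lt hl),
    nhdsWithin_le_nhds (eventually_forall_isExperiment_BRf_mix_subset uR μ0 ψ)]
    with χ hχ1 hχ0 hlχ hBR
  refine hlχ.trans_le (le_csInf (chiPBEPayoffs_nonempty hμ0 ⟨hχ0, hχ1⟩) fun s hs => ?_)
  obtain ⟨_, ⟨σ, α, β, h, rfl⟩, hle⟩ := (mem_chiPBEPayoffs_iff.1 hs).2 ψ hψ
  exact (h.mix_le_expectedPayoff hψ hμ0 ⟨hχ0, hχ1⟩ (hBR σ h.isExperiment)
    fun a => hc (Set.mem_range_self a)).trans hle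

end Bounds

section Genericity

theorem addHaar_eq_zero_of_forall_add_smul_notMem {E : Type*} [NormedAddCommGroup E]
    [NormedSpace ℝ E] [MeasurableSpace E] [BorelSpace E] [FiniteDimensional ℝ E] (μ : Measure E)
    [μ.IsAddHaarMeasure] {s : Set E} (hs : MeasurableSet s) (d : E)
    (h : ∀ x ∈ s, ∀ t : ℝ, 0 < t → x + t • d ∉ s) : μ s = 0 := by
  have hbdd : Bornology.IsBounded (Set.range fun n : ℕ => (1 / ((n : ℝ) + 1)) • d) :=
    Metric.isBounded_range_of_tendsto _
      (tendsto_one_div_add_atTop_nhds_zero_nat.smul tendsto_const_nhds)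
  refine Measure.addHaar_eq_zero_of_disjoint_translates μ _ hbdd ?_ hs
  refine (pairwise_disjoint_on _).2 fun m n hmn => Set.disjoint_left.2 fun z hm hn => ?_
  simp only [Set.singleton_add, Set.mem_image] at hm hn
  obtain ⟨x, hx, rfl⟩ := hm
  obtain ⟨y, hy, hyx⟩ := hn
  have hlt : 1 / ((n : ℝ) + 1) < 1 / ((m : ℝ) + 1) := Nat.one_div_lt_one_div hmn
  have hxy : x + (1 / ((m : ℝ) + 1) - 1 / ((n : ℝ) + 1)) • d = y := by
    rw [sub_smul, ← add_sub_assoc, add_comm x, ← hyx, add_sub_cancel_left]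
  exact h x hx _ (sub_pos.2 hlt) (hxy ▸ hy)

/-- Receiver utilities, as vectors in `ℝ^{A×Θ}`, under which `a` is a best response to some belief
in `K`. -/
def weakUtilities {A Θ : Type*} [Fintype Θ] (K : Set (Θ → ℝ)) (a : A) : Set (A × Θ → ℝ) :=
  {u | ∃ μ ∈ K, a ∈ BRf u.curry μ}

/-- Receiver utilities, as vectors in `ℝ^{A×Θ}`, under which `a` is the only best response to some
belief in `K`. -/
def strictUtilities {A Θ : Type*} [Fintype Θ] (K : Set (Θ → ℝ)) (a : A) : Set (A × Θ → ℝ) :=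
  {u | ∃ μ ∈ K, BRf u.curry μ = {a}}

/-- The beliefs supported in a set of states, a face of the belief simplex. -/
def beliefsOn {Θ : Type*} [Fintype Θ] (S : Set Θ) : Set (Θ → ℝ) :=
  {μ ∈ stdSimplex ℝ Θ | ∀ θ ∉ S, μ θ = 0}

/-- Receiver utilities under which any action that is a best response to some belief on a face of
the belief simplex is the only best response to some belief on that face. -/
def genericUtilities (A Θ : Type*) [Fintype Θ] : Set (A × Θ → ℝ) :=
  {u | ∀ (S : Set Θ) (a : A),
    u ∈ weakUtilities (beliefsOn S) a → u ∈ strictUtilities (beliefsOn S) a}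

variable {A Θ : Type*} [Fintype Θ] {K : Set (Θ → ℝ)} {a : A}

theorem isClosed_weakUtilities (hK : IsCompact K) (a : A) : IsClosed (weakUtilities K a) := by
  have : CompactSpace K := isCompact_iff_compactSpace.1 hK
  have hclosed : IsClosed {p : K × (A × Θ → ℝ) | a ∈ BRf p.2.curry p.1.1} :=
    (isClosed_setOf_mem_BRf a).preimage (f := fun p : K × (A × Θ → ℝ) => (p.2.curry, p.1.1))
      (by unfold Function.curry; fun_prop)
  convert isClosedMap_snd_of_compactSpace _ hclosed using 1
  ext u
  simp [weakUtilities]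

theorem isOpen_strictUtilities [Finite A] (K : Set (Θ → ℝ)) (a : A) :
    IsOpen (strictUtilities K a) := by
  rw [isOpen_iff_mem_nhds]
  rintro u ⟨μ, hμ, hBR⟩
  have : Nonempty A := ⟨a⟩
  have hcont : Continuous fun u : A × Θ → ℝ => (u.curry, μ) := by unfold Function.curry; fun_prop
  filter_upwards [hcont.continuousAt.eventually (eventually_BRf_subset (u.curry, μ))] with u' hu'
  exact ⟨μ, hμ, BRf_nonempty.subset_singleton_iff.1 (hu'.trans_eq hBR)⟩

theorem add_smul_mem_strictUtilities [DecidableEq A] {u : A × Θ → ℝ} (hK : K ⊆ stdSimplex ℝ Θ)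
    (hu : u ∈ weakUtilities K a) {t : ℝ} (ht : 0 < t) :
    u + t • (Pi.single a 1 ∘ Prod.fst) ∈ strictUtilities K a := by
  obtain ⟨μ, hμ, ha⟩ := hu
  set u' := u + t • (Pi.single a 1 ∘ Prod.fst)
  have hvalue (b : A) : u'.curry b ⬝ᵥ μ = u.curry b ⬝ᵥ μ + t * (Pi.single a 1 : A → ℝ) b := by
    have : u'.curry b = u.curry b + (t * (Pi.single a 1 : A → ℝ) b) • 1 := by
      ext θ
      simp [u', Function.curry]
    rw [this, add_dotProduct, smul_dotProduct, one_dotProduct, (hK hμ).2, smul_eq_mul, mul_one]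
  have hlt (b : A) (hb : b ≠ a) : u'.curry b ⬝ᵥ μ < u'.curry a ⬝ᵥ μ := by
    simpa [hvalue, hb] using (mem_BRf_iff.1 ha b).trans_lt (lt_add_of_pos_right _ ht)
  refine ⟨μ, hμ, Set.eq_singleton_iff_unique_mem.2 ⟨mem_BRf_iff.2 fun b => ?_, fun b hb => ?_⟩⟩
  · rcases eq_or_ne b a with rfl | hb
    exacts [le_rfl, (hlt b hb).le]
  · by_contra hne
    exact (mem_BRf_iff.1 hb a).not_gt (hlt b hne)

theorem isCompact_beliefsOn (S : Set Θ) : IsCompact (beliefsOn S) := by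
  refine (isCompact_stdSimplex ℝ Θ).inter_right (t := {μ | ∀ θ ∉ S, μ θ = 0}) ?_
  simp only [Set.ofPred_forall]
  exact isClosed_iInter fun θ => isClosed_iInter fun _ => isClosed_eq (by fun_prop) (by fun_prop)

theorem compl_genericUtilities :
    (genericUtilities A Θ)ᶜ =
      ⋃ (S : Set Θ) (a : A), weakUtilities (beliefsOn S) a \ strictUtilities (beliefsOn S) a := by
  ext u
  simp [genericUtilities]

theorem isClosed_compl_genericUtilities [Finite A] : IsClosed (genericUtilities A Θ)ᶜ := by
  rw [compl_genericUtilities]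
  exact isClosed_iUnion_of_finite fun S => isClosed_iUnion_of_finite fun a =>
    (isClosed_weakUtilities (isCompact_beliefsOn S) a).sdiff (isOpen_strictUtilities _ a)

theorem volume_weakUtilities_diff_strictUtilities [Fintype A] (hK : IsCompact K)
    (hK' : K ⊆ stdSimplex ℝ Θ) (a : A) : volume (weakUtilities K a \ strictUtilities K a) = 0 := by
  classical
  exact addHaar_eq_zero_of_forall_add_smul_notMem volume
    ((isClosed_weakUtilities hK a).sdiff (isOpen_strictUtilities K a)).measurableSet _
    fun u hu t ht h => h.2 (add_smul_mem_strictUtilities hK' hu.1 ht)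

theorem volume_compl_genericUtilities [Fintype A] : volume (genericUtilities A Θ)ᶜ = 0 := by
  rw [compl_genericUtilities]
  exact measure_iUnion_null fun S => measure_iUnion_null fun a =>
    volume_weakUtilities_diff_strictUtilities (isCompact_beliefsOn S) (fun _ h => h.1) a

theorem isNowhereDense_compl_genericUtilities [Finite A] :
    IsNowhereDense (genericUtilities A Θ)ᶜ := by
  cases nonempty_fintype A
  rw [isClosed_compl_genericUtilities.isNowhereDense_iff]
  exact Measure.interior_eq_empty_of_null volume_compl_genericUtilities

end Genericity

section Perturbation

variable {A Θ : Type*} {μ0 : Θ → ℝ}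

theorem exists_pos_smul_le [Finite Θ] {z : Θ → ℝ} (hμ0 : 0 ≤ μ0) (hz : ∀ θ, μ0 θ = 0 → z θ = 0) :
    ∃ ε : ℝ, 0 < ε ∧ ε • z ≤ μ0 := by
  have hle : ∀ᶠ ε : ℝ in 𝓝[>] 0, ∀ θ, ε * z θ ≤ μ0 θ := eventually_all.2 fun θ => by
    rcases (hμ0 θ).eq_or_lt with h | h
    · simp [hz θ h.symm, ← h]
    · exact nhdsWithin_le_nhds
        (((continuous_mul_const (z θ)).tendsto' 0 0 (zero_mul _)).eventually_le_const h)
  exact (eventually_mem_nhdsWithin.and hle).exists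

namespace IsSplitting

variable {ι : Type*} [Fintype ι] {q r : ι → Θ → ℝ}

theorem mix (hq : IsSplitting μ0 q) (hr : IsSplitting μ0 r) {t : ℝ} (ht : t ∈ Set.Icc (0 : ℝ) 1) :
    IsSplitting μ0 ((1 - t) • q + t • r) where
  nonneg i := add_nonneg (smul_nonneg (sub_nonneg.2 ht.2) (hq.nonneg i))
    (smul_nonneg ht.1 (hr.nonneg i))
  sum_eq := by
    simp only [Pi.add_apply, Pi.smul_apply, Finset.sum_add_distrib, ← Finset.smul_sum, hq.sum_eq,
      hr.sum_eq, ← add_smul, sub_add_cancel, one_smul]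

theorem apply_eq_zero (hq : IsSplitting μ0 q) {θ : Θ} (hθ : μ0 θ = 0) (i : ι) : q i θ = 0 := by
  rw [← hq.sum_apply θ] at hθ
  exact (Finset.sum_eq_zero_iff_of_nonneg fun i _ => hq.nonneg i θ).1 hθ i (Finset.mem_univ i)

theorem option_elim_zero (hq : IsSplitting μ0 q) :
    IsSplitting μ0 fun o : Option ι => o.elim 0 q where
  nonneg o := by cases o <;> simp [hq.nonneg]
  sum_eq := by simp [Fintype.sum_option, hq.sum_eq]

theorem option_elim_sub (hq : ∀ i, 0 ≤ q i) (hle : ∑ i, q i ≤ μ0) :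
    IsSplitting μ0 fun o : Option ι => o.elim (μ0 - ∑ i, q i) q where
  nonneg o := by cases o <;> simp [hq, hle]
  sum_eq := by simp [Fintype.sum_option]

end IsSplitting

variable [Fintype Θ] {u : A × Θ → ℝ}

theorem exists_mem_beliefsOn_BRf_eq_singleton (hu : u ∈ genericUtilities A Θ) {S : Set Θ}
    {x : Θ → ℝ} (hx : 0 ≤ x) (hx' : x ≠ 0) (hS : ∀ θ ∉ S, x θ = 0) {a : A}
    (ha : a ∈ BRf u.curry x) : ∃ z ∈ beliefsOn S, BRf u.curry z = {a} := by
  obtain ⟨b, hb, hbx, hBR⟩ := exists_mem_stdSimplex_BRf_eq hx hx' u.curry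
  have hsum : ∑ θ, x θ ≠ 0 := by
    intro h
    exact hx' (by rw [← hbx, h, zero_smul])
  refine hu S a ⟨b, ⟨hb, fun θ hθ => ?_⟩, hBR ▸ ha⟩
  have := congrFun hbx θ
  rw [hS θ hθ] at this
  exact (mul_eq_zero.1 this).resolve_left hsum

theorem sum_mul_wG_mix [Finite A] [Nonempty A] {uR : A → Θ → ℝ} {uS : A → ℝ} {x z : Θ → ℝ} {a : A}
    (hx : a ∈ BRf uR x) (hz : x = 0 ∧ z = 0 ∨ BRf uR z = {a}) {t : ℝ} (ht : t ∈ Set.Ioo (0 : ℝ) 1) :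
    (∑ θ, ((1 - t) • x + t • z) θ) * wG uS uR ((1 - t) • x + t • z) =
      (1 - t) * ((∑ θ, x θ) * uS a) + t * ((∑ θ, z θ) * uS a) := by
  rcases hz with ⟨rfl, rfl⟩ | hz
  · simp
  have hBR : BRf uR ((1 - t) • x + t • z) = {a} := by
    refine BRf_nonempty.subset_singleton_iff.1 ?_
    rw [← hz, ← BRf_smul (x := z) ht.1]
    exact BRf_add_subset_right (BRf_subset_BRf_smul (sub_nonneg.2 ht.2.le) hx)
      (BRf_subset_BRf_smul ht.1.le (hz.symm ▸ Set.mem_singleton a))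
  have hwG : wG uS uR ((1 - t) • x + t • z) = uS a := by simp [wG, hBR]
  simp only [hwG, Pi.add_apply, Pi.smul_apply, smul_eq_mul, Finset.sum_add_distrib,
    ← Finset.mul_sum]
  ring

variable [Fintype A] {x : A → Θ → ℝ}

theorem exists_isSplitting_BRf_eq_singleton (hu : u ∈ genericUtilities A Θ) (hμ0 : 0 ≤ μ0)
    (hx : IsSplitting μ0 x) (hBR : ∀ a, a ∈ BRf u.curry (x a)) :
    ∃ z : Option A → Θ → ℝ, IsSplitting μ0 z ∧
      ∀ a, x a = 0 ∧ z (some a) = 0 ∨ BRf u.curry (z (some a)) = {a} := by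
  have hstrict : ∀ a, ∃ z : Θ → ℝ, 0 ≤ z ∧ (∀ θ, μ0 θ = 0 → z θ = 0) ∧
      (x a = 0 ∧ z = 0 ∨ BRf u.curry z = {a}) := fun a => by
    rcases eq_or_ne (x a) 0 with h | h
    · exact ⟨0, le_rfl, fun _ _ => rfl, .inl ⟨h, rfl⟩⟩
    · obtain ⟨z, hz, hza⟩ := exists_mem_beliefsOn_BRf_eq_singleton (S := {θ | μ0 θ ≠ 0}) hu
        (hx.nonneg a) h (fun θ hθ => hx.apply_eq_zero (not_not.1 hθ) a) (hBR a)
      exact ⟨z, hz.1.1, fun θ hθ => hz.2 θ (not_not.2 hθ), .inr hza⟩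
  choose z hz hzμ0 hza using hstrict
  obtain ⟨ε, hε, hle⟩ := exists_pos_smul_le (z := ∑ a, z a) hμ0 fun θ hθ => by
    rw [Finset.sum_apply]
    exact Finset.sum_eq_zero fun a _ => hzμ0 a θ hθ
  refine ⟨_, IsSplitting.option_elim_sub (q := fun a => ε • z a)
    (fun a => smul_nonneg hε.le (hz a)) (by rwa [← Finset.smul_sum]), fun a => ?_⟩
  refine (hza a).imp (fun h => ⟨h.1, by simp [h.2]⟩) fun h => ?_
  rwa [Option.elim_some, BRf_smul hε]

theorem exists_isSplitting_lt_sum_wG [Nonempty A] (hu : u ∈ genericUtilities A Θ) (hμ0 : 0 ≤ μ0)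
    (hx : IsSplitting μ0 x) (hBR : ∀ a, a ∈ BRf u.curry (x a)) {uS : A → ℝ} {l : ℝ}
    (hl : l < ∑ a, (∑ θ, x a θ) * uS a) :
    ∃ y : Option A → Θ → ℝ, IsSplitting μ0 y ∧
      l < ∑ o, (∑ θ, y o θ) * wG uS u.curry (y o) := by
  obtain ⟨z, hz, hza⟩ := exists_isSplitting_BRf_eq_singleton hu hμ0 hx hBR
  let x' : Option A → Θ → ℝ := fun o => o.elim 0 x
  let y (t : ℝ) : Option A → Θ → ℝ := (1 - t) • x' + t • z
  set V := ∑ a, (∑ θ, x a θ) * uS a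
  let W := (∑ θ, z none θ) * wG uS u.curry (z none) + ∑ a, (∑ θ, z (some a) θ) * uS a
  have hvalue {t : ℝ} (ht : t ∈ Set.Ioo (0 : ℝ) 1) :
      ∑ o, (∑ θ, y t o θ) * wG uS u.curry (y t o) = (1 - t) * V + t * W := by
    have hnone : y t none = t • z none := by simp [y, x']
    have hsome a : (∑ θ, y t (some a) θ) * wG uS u.curry (y t (some a)) =
        (1 - t) * ((∑ θ, x a θ) * uS a) + t * ((∑ θ, z (some a) θ) * uS a) :=
      sum_mul_wG_mix (hBR a) (hza a) ht
    rw [Fintype.sum_option, hnone, wG, sum_smul_mul_BRf_smul (fun S => sInf (uS '' S)) ht.1.le,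
      Finset.sum_congr rfl fun a _ => hsome a, Finset.sum_add_distrib, ← Finset.mul_sum,
      ← Finset.mul_sum, mul_add]
    exact add_left_comm _ _ _
  have hlim : Tendsto (fun t => (1 - t) * V + t * W) (𝓝[>] 0) (𝓝 V) :=
    (Continuous.tendsto' (by fun_prop) _ _ (by ring)).mono_left nhdsWithin_le_nhds
  obtain ⟨t, hlt, ht⟩ :=
    ((hlim.eventually_const_lt hl).and (Ioo_mem_nhdsGT (zero_lt_one' ℝ))).exists
  exact ⟨y t, hx.option_elim_zero.mix hz (Set.Ioo_subset_Icc_self ht),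
    hlt.trans_eq (hvalue ht).symm⟩

end Perturbation

section SupportReduction

theorem linearIndependent_of_affineIndependent_of_forall_eq_one {k V ι : Type*} [Ring k]
    [AddCommGroup V] [Module k V] {p : ι → V} (hp : AffineIndependent k p) (φ : V →ₗ[k] k)
    (hφ : ∀ i, φ (p i) = 1) : LinearIndependent k p := by
  rw [affineIndependent_iff] at hp
  refine linearIndependent_iff'.2 fun s w hw => hp s w ?_ hw
  simpa [hφ] using congrArg φ hw

namespace IsSplitting

variable {Θ ι M : Type*} [Fintype ι] [Fintype M] {μ0 : Θ → ℝ} {q : ι → Θ → ℝ} {F : (Θ → ℝ) → ℝ}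

theorem exists_of_card_le (hq : IsSplitting μ0 q) (hcard : Fintype.card ι ≤ Fintype.card M)
    (hF : F 0 = 0) : ∃ r : M → Θ → ℝ, IsSplitting μ0 r ∧ ∑ m, F (r m) = ∑ i, F (q i) := by
  obtain ⟨e⟩ := Function.Embedding.nonempty_of_card_le hcard
  have hout m (hm : m ∉ Set.range e) : Function.extend e q 0 m = 0 :=
    Function.extend_apply' _ _ _ hm
  have hin i : Function.extend e q 0 (e i) = q i := e.injective.extend_apply q 0 i
  refine ⟨Function.extend e q 0, ⟨fun m => ?_, ?_⟩, ?_⟩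
  · by_cases hm : m ∈ Set.range e
    · obtain ⟨i, rfl⟩ := hm
      exact (hin i).symm ▸ hq.nonneg i
    · exact (hout m hm).ge
  · rw [← hq.sum_eq]
    exact (Fintype.sum_of_injective e e.injective _ _ hout fun i => (hin i).symm).symm
  · exact (Fintype.sum_of_injective e e.injective _ _ (fun m hm => by rw [hout m hm, hF])
      fun i => by rw [hin]).symm

variable [Fintype Θ]

theorem exists_of_card_lt (hq : IsSplitting μ0 q) (hμ0 : μ0 ∈ stdSimplex ℝ Θ)
    (hcard : Fintype.card Θ < Fintype.card M) (hF : ∀ c : ℝ, 0 ≤ c → ∀ y, F (c • y) = c * F y) :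
    ∃ r : M → Θ → ℝ, IsSplitting μ0 r ∧ ∑ m, F (r m) = ∑ i, F (q i) := by
  have := nonempty_of_mem_stdSimplex hμ0
  choose b hb hbq using fun i => exists_mem_stdSimplex_smul_eq (hq.nonneg i)
  have hmass i : 0 ≤ ∑ θ, q i θ := Finset.sum_nonneg fun θ _ => hq.nonneg i θ
  let graph : Set ((Θ → ℝ) × ℝ) := {p | p.1 ∈ stdSimplex ℝ Θ ∧ F p.1 = p.2}
  have hmem : (μ0, ∑ i, F (q i)) ∈ convexHull ℝ graph := by
    refine mem_convexHull_of_exists_fintype (fun i => ∑ θ, q i θ) (fun i => (b i, F (b i)))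
      hmass (hq.sum_sum_eq_one hμ0) (fun i => ⟨hb i, rfl⟩) (Prod.ext ?_ ?_)
    · simp [Prod.fst_sum, hbq, hq.sum_eq]
    · simp [Prod.snd_sum, ← hF _ (hmass _), hbq]
  obtain ⟨κ, _, z, w, hz, hindep, hw, -, hwz⟩ := eq_pos_convex_span_of_mem_convexHull hmem
  have hz k : z k ∈ graph := hz (Set.mem_range_self k)
  have hr : IsSplitting μ0 fun k => w k • (z k).1 := by
    refine ⟨fun k => smul_nonneg (hw k).le (hz k).1.1, ?_⟩
    simpa [Prod.fst_sum] using congrArg Prod.fst hwz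
  have hFr : ∑ k, F (w k • (z k).1) = ∑ i, F (q i) := by
    simpa [Prod.snd_sum, hF _ (hw _).le, (hz _).2] using congrArg Prod.snd hwz
  have hκ : Fintype.card κ ≤ Fintype.card Θ + 1 := by
    have hlin := linearIndependent_of_affineIndependent_of_forall_eq_one hindep
      (Fintype.linearCombination ℝ (fun _ : Θ => (1 : ℝ)) ∘ₗ LinearMap.fst ℝ _ _)
      fun k => by simp [Fintype.linearCombination_apply, (hz k).1.2]
    simpa using hlin.fintype_card_le_finrank
  obtain ⟨r, hr', hFr'⟩ := hr.exists_of_card_le (hκ.trans hcard) (F := F)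
    (by simpa using hF 0 le_rfl 0)
  exact ⟨r, hr', hFr'.trans hFr⟩

end IsSplitting

end SupportReduction

section Robustness

variable {A Θ M : Type*} [Fintype A] [Fintype Θ] [Fintype M] [Nonempty A] {u : A × Θ → ℝ}
  {μ0 : Θ → ℝ}

theorem eventually_lt_wStar_of_lt_vHatG (hM : Fintype.card Θ < Fintype.card M)
    (hu : u ∈ genericUtilities A Θ) (hμ0 : μ0 ∈ stdSimplex ℝ Θ) {uS : A → ℝ} {l : ℝ}
    (hl : l < vHatG uS u.curry μ0) : ∀ᶠ χ in 𝓝[≤] 1, l < wStar A M uS u.curry μ0 χ := by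
  have : Nonempty M := Fintype.card_pos_iff.1 (Nat.zero_lt_of_lt hM)
  obtain ⟨x, hx, hBR, hlx⟩ := exists_isSplitting_of_lt_vHatG hμ0 hl
  obtain ⟨y, hy, hly⟩ := exists_isSplitting_lt_sum_wG hu hμ0.1 hx hBR hlx
  obtain ⟨q, hq, hqy⟩ := hy.exists_of_card_lt hμ0 hM
    (F := fun v => (∑ θ, v θ) * wG uS u.curry v)
    fun c hc v => sum_smul_mul_BRf_smul (fun S => sInf (uS '' S)) hc v
  exact eventually_lt_wStar_of_isSplitting hq hμ0 (hly.trans_eq hqy.symm)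

theorem tendsto_wStar (hM : Fintype.card Θ < Fintype.card M) (hu : u ∈ genericUtilities A Θ)
    (uS : A → ℝ) (hμ0 : μ0 ∈ stdSimplex ℝ Θ) :
    Tendsto (wStar A M uS u.curry μ0) (𝓝[≤] 1) (𝓝 (vHatG uS u.curry μ0)) := by
  have : Nonempty M := Fintype.card_pos_iff.1 (Nat.zero_lt_of_lt hM)
  refine tendsto_order.2 ⟨fun l => eventually_lt_wStar_of_lt_vHatG hM hu hμ0, fun r hr => ?_⟩
  filter_upwards [self_mem_nhdsWithin, nhdsWithin_le_nhds (Ici_mem_nhds zero_lt_one)]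
    with χ hχ1 hχ0
  exact (wStar_le_vHatG hμ0 ⟨hχ0, hχ1⟩).trans_lt hr

end Robustness

theorem generic_strong_robustness_general {A Θ M : Type*} [Fintype A] [Fintype Θ] [Fintype M]
    [Nonempty A] (hM : Fintype.card Θ < Fintype.card M) :
    ∃ UR : Set (A × Θ → ℝ), volume URᶜ = 0 ∧ IsNowhereDense URᶜ ∧
      ∀ uR ∈ UR, ∀ uS : A → ℝ, ∀ μ0 ∈ stdSimplex ℝ Θ,
        Tendsto (wStar A M uS uR.curry μ0) (𝓝[≤] 1) (𝓝 (vHatG uS uR.curry μ0)) :=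
  ⟨genericUtilities A Θ, volume_compl_genericUtilities, isNowhereDense_compl_genericUtilities,
    fun _ hu uS _ hμ0 => tendsto_wStar hM hu uS hμ0⟩

/-- **Generic strong robustness.** For finite `A`, `Θ`, and `M` with `|M| ≥ 2|Θ|`,
there is a set of receiver utilities whose complement is Lebesgue-null and nowhere dense
such that, for every receiver utility in the set, every state-independent sender utility,
and every prior, the infimum sender `χ`-PBE payoff converges to the Bayesian persuasion
value `v̂(μ0)` as credibility `χ` tends to `1` from below. -/
theorem generic_strong_robustness
    (A Θ M : Type) [Fintype A] [Fintype Θ] [Fintype M]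
    [Nonempty A] [Nonempty Θ] [Nonempty M]
    (hM : 2 * Fintype.card Θ ≤ Fintype.card M) :
    ∃ UR : Set (A × Θ → ℝ), volume URᶜ = 0 ∧ IsNowhereDense URᶜ ∧
      ∀ uR ∈ UR, ∀ uS : A → ℝ, ∀ μ0 ∈ stdSimplex ℝ Θ,
        Tendsto (fun χ : ℝ => wStar A M uS (fun a θ => uR (a, θ)) μ0 χ)
          (nhdsWithin 1 (Set.Ico (0 : ℝ) 1))
          (nhds (vHatG uS (fun a θ => uR (a, θ)) μ0)) := by
  have hcard : Fintype.card Θ < Fintype.card M := by have := Fintype.card_pos (α := Θ); omega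
  obtain ⟨UR, hnull, hdense, hlim⟩ := generic_strong_robustness_general (A := A) hcard
  exact ⟨UR, hnull, hdense, fun uR huR uS μ0 hμ0 => (hlim uR huR uS μ0 hμ0).mono_left
    (nhdsWithin_mono 1 (Set.Ico_subset_Iio_self.trans Set.Iio_subset_Iic_self))⟩
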